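/- There exists a constant C > 0 such that the following holds. Let u : ℝ³ → ℝ be a smooth function which is ℤ³-periodic (u(x + a) = u(x) for all a ∈ ℤ³), satisfies sup u = 0, and satisfies the differential inequality Δu(x) + ∂_t u(x) ≥ −2 for every x ∈ ℝ³, where Δu = ∂²u/∂x² + ∂²u/∂y² + ∂²u/∂t² is the flat Laplacian in the coordinates (x, y, t) of ℝ³. Then ∫_{[0,1]³} |u| ≤ C. -/

import Mathlib

open MeasureTheory

/-- The partial derivative of `w : ℝ³ → ℝ` in the `i`-th coordinate direction. -/
noncomputable def pd (i : Fin 3) (w : EuclideanSpace ℝ (Fin 3) → ℝ) :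
    EuclideanSpace ℝ (Fin 3) → ℝ :=
  fun x => fderiv ℝ w x (EuclideanSpace.single i (1 : ℝ))

local notation "E3" => EuclideanSpace ℝ (Fin 3)

/-- A function on `ℝ³` is `ℤ³`-periodic. -/
def IsLatticePeriodic {F : Type*} (f : E3 → F) : Prop :=
  ∀ x a : E3, (∀ i, ∃ k : ℤ, a i = (k : ℝ)) → f (x + a) = f x

/-- The closed unit cube in `ℝ³`. -/
def unitCube : Set E3 := {x | ∀ i, 0 ≤ x i ∧ x i ≤ 1}

theorem isCompact_unitCube : IsCompact unitCube := by
  have h : IsCompact (Set.univ.pi fun _ : Fin 3 => Set.Icc (0 : ℝ) 1) :=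
    isCompact_univ_pi fun _ => isCompact_Icc
  have h2 := (EuclideanSpace.equiv (Fin 3) ℝ).toHomeomorph.isCompact_preimage.mpr h
  convert h2 using 1
  ext x
  simp [unitCube, Pi.le_def, forall_and]

theorem exists_mem_unitCube {F : Type*} {f : E3 → F} (hf : IsLatticePeriodic f) (x : E3) :
    ∃ y ∈ unitCube, f y = f x := by
  let a : E3 := WithLp.toLp 2 fun i => -(⌊x i⌋ : ℝ)
  refine ⟨x + a, fun i => ?_, hf x a fun i => ⟨-⌊x i⌋, by simp [a]⟩⟩
  have h : (x + a) i = Int.fract (x i) := by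
    simp [a, Int.fract, sub_eq_add_neg]
  rw [h]
  exact ⟨Int.fract_nonneg _, (Int.fract_lt_one _).le⟩

theorem IsLatticePeriodic.exists_norm_le {F : Type*} [NormedAddCommGroup F] {f : E3 → F}
    (hf : IsLatticePeriodic f) (hc : Continuous f) : ∃ M, ∀ x, ‖f x‖ ≤ M := by
  obtain ⟨M, hM⟩ := isCompact_unitCube.exists_bound_of_continuousOn hc.continuousOn
  refine ⟨M, fun x => ?_⟩
  obtain ⟨y, hy, hxy⟩ := exists_mem_unitCube hf x
  exact hxy ▸ hM y hy

theorem IsLatticePeriodic.fderiv {f : E3 → ℝ} (hf : IsLatticePeriodic f) :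
    IsLatticePeriodic (fderiv ℝ f) := by
  intro x a ha
  rw [← fderiv_comp_add_right]
  congr 1
  funext y
  exact hf y a ha

theorem IsLatticePeriodic.pd {f : E3 → ℝ} (hf : IsLatticePeriodic f) (i : Fin 3) :
    IsLatticePeriodic (pd i f) := by
  intro x a ha
  simp only [_root_.pd, hf.fderiv x a ha]

theorem contDiff_pd {f : E3 → ℝ} (hf : ContDiff ℝ (⊤ : ℕ∞) f) (i : Fin 3) :
    ContDiff ℝ (⊤ : ℕ∞) (pd i f) :=
  (hf.fderiv_right (m := (⊤ : ℕ∞)) (by simp)).clm_apply contDiff_const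

theorem fderiv_apply_eq_sum_pd (f : E3 → ℝ) (x z : E3) :
    fderiv ℝ f x z = ∑ i, z i * pd i f x := by
  have hz : z = ∑ i, z i • EuclideanSpace.single i (1 : ℝ) := by
    ext j
    simp only [Fin.sum_univ_three]
    fin_cases j <;> simp
  conv_lhs => rw [hz]
  simp [pd]

/-- The unnormalised Gaussian weight on `ℝ³`. -/
noncomputable def gaussWeight (z : E3) : ℝ := Real.exp (-(1 / 2) * ‖z‖ ^ 2)

theorem gaussWeight_pos (z : E3) : 0 < gaussWeight z := Real.exp_pos _

theorem continuous_gaussWeight : Continuous gaussWeight := by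
  unfold gaussWeight; fun_prop

theorem hasFDerivAt_gaussWeight (z : E3) :
    HasFDerivAt gaussWeight (-gaussWeight z • innerSL ℝ z) z := by
  have h := (((hasStrictFDerivAt_norm_sq z).hasFDerivAt).const_mul (-(1 / 2) : ℝ)).exp
  convert! h using 1
  ext w
  simp [gaussWeight]

theorem integrable_exp_neg_mul_norm_sq {b : ℝ} (hb : 0 < b) :
    Integrable fun z : E3 => Real.exp (-b * ‖z‖ ^ 2) := by
  have h := (GaussianFourier.integrable_cexp_neg_mul_sq_norm_add (V := E3) (b := (b : ℂ))
    (by simpa using hb) 0 0).norm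
  refine h.congr (Filter.Eventually.of_forall fun z => ?_)
  simp only [Complex.norm_exp]
  congr 1
  simp [← Complex.ofReal_pow]

theorem integrable_mul_gaussWeight {h : E3 → ℝ} (hc : Continuous h) {A : ℝ}
    (hA : ∀ z, |h z| ≤ A * (1 + ‖z‖)) : Integrable fun z => h z * gaussWeight z := by
  have hA0 : 0 ≤ A := by
    have h0 := hA 0
    have := abs_nonneg (h 0)
    simp only [norm_zero] at h0
    linarith
  refine ((integrable_exp_neg_mul_norm_sq (b := 1 / 4) (by norm_num)).const_mul (2 * A)).mono'
    (hc.mul continuous_gaussWeight).aestronglyMeasurable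
    (Filter.Eventually.of_forall fun z => ?_)
  set t := ‖z‖ with ht
  have ht0 : 0 ≤ t := norm_nonneg z
  have hexp : 1 + t ≤ 2 * Real.exp (1 / 4 * t ^ 2) := by
    have := Real.add_one_le_exp (1 / 4 * t ^ 2)
    nlinarith [sq_nonneg (t - 2), sq_nonneg (t - 1)]
  have hk : gaussWeight z = Real.exp (-(1 / 4) * t ^ 2) * Real.exp (-(1 / 4) * t ^ 2) := by
    rw [gaussWeight, ← Real.exp_add]; congr 1; ring
  have hinv : Real.exp (1 / 4 * t ^ 2) * Real.exp (-(1 / 4) * t ^ 2) = 1 := by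
    rw [← Real.exp_add]; simp
  rw [Real.norm_eq_abs, abs_mul, abs_of_pos (gaussWeight_pos z)]
  calc |h z| * gaussWeight z ≤ (A * (2 * Real.exp (1 / 4 * t ^ 2))) * gaussWeight z := by
        refine mul_le_mul_of_nonneg_right ((hA z).trans ?_) (gaussWeight_pos z).le
        exact mul_le_mul_of_nonneg_left hexp hA0
    _ = 2 * A * (Real.exp (1 / 4 * t ^ 2) * Real.exp (-(1 / 4) * t ^ 2))
          * Real.exp (-(1 / 4) * t ^ 2) := by rw [hk]; ring
    _ = _ := by rw [hinv, mul_one]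

theorem integrable_bounded_mul_gaussWeight {h : E3 → ℝ} (hc : Continuous h) {A : ℝ}
    (hA : ∀ z, |h z| ≤ A) : Integrable fun z => h z * gaussWeight z := by
  refine integrable_mul_gaussWeight hc (A := A) fun z => (hA z).trans ?_
  have := (abs_nonneg _).trans (hA z)
  nlinarith [norm_nonneg z, mul_nonneg this (norm_nonneg z)]

theorem integrable_gaussWeight : Integrable gaussWeight := by
  simpa using integrable_bounded_mul_gaussWeight (h := fun _ => 1) continuous_const (A := 1)
    (by simp)

theorem abs_apply_le_norm (z : E3) (i : Fin 3) : |z i| ≤ ‖z‖ := by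
  simpa using PiLp.norm_apply_le z i

theorem integrable_coord_mul_gaussWeight {h : E3 → ℝ} (hc : Continuous h) {A : ℝ}
    (hA : ∀ z, |h z| ≤ A) (i : Fin 3) : Integrable fun z => z i * h z * gaussWeight z := by
  refine integrable_mul_gaussWeight (by fun_prop) (A := A) fun z => ?_
  have hA0 := (abs_nonneg _).trans (hA z)
  rw [abs_mul]
  calc |z i| * |h z| ≤ ‖z‖ * A :=
        mul_le_mul (abs_apply_le_norm z i) (hA z) (abs_nonneg _) (norm_nonneg _)
    _ ≤ _ := by nlinarith

theorem integral_coord_mul_gaussWeight {f : E3 → ℝ} (hf : ContDiff ℝ (⊤ : ℕ∞) f)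
    (hp : IsLatticePeriodic f) (c : E3) (r : ℝ) (i : Fin 3) :
    ∫ z, z i * f (c + r • z) * gaussWeight z =
      ∫ z, r * pd i f (c + r • z) * gaussWeight z := by
  have hfc := hf.continuous
  have hdc := (contDiff_pd hf i).continuous
  obtain ⟨M, hM⟩ := hp.exists_norm_le hfc
  obtain ⟨N, hN⟩ := (hp.pd i).exists_norm_le hdc
  have hline (z : E3) : HasFDerivAt (fun z : E3 => f (c + r • z))
      ((fderiv ℝ f (c + r • z)).comp (r • ContinuousLinearMap.id ℝ E3)) z := by
    refine HasFDerivAt.comp z (hf.differentiable (by simp) _).hasFDerivAt ?_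
    exact ((hasFDerivAt_id z).const_smul r).const_add c
  have hd (z : E3) : fderiv ℝ (fun z : E3 => f (c + r • z)) z (EuclideanSpace.single i 1) =
      r * pd i f (c + r • z) := by
    rw [(hline z).fderiv]; simp [pd]
  have hg (z : E3) : fderiv ℝ gaussWeight z (EuclideanSpace.single i 1) =
      -(z i * gaussWeight z) := by
    rw [(hasFDerivAt_gaussWeight z).fderiv]
    simp [EuclideanSpace.inner_single_right, mul_comm]
  have key := integral_mul_fderiv_eq_neg_fderiv_mul_of_integrable (μ := (volume : Measure E3))
    (f := fun z : E3 => f (c + r • z)) (g := gaussWeight) (v := EuclideanSpace.single i (1 : ℝ))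
    ?_ ?_ ?_ (fun z _ => (hline z).differentiableAt)
    (fun z _ => (hasFDerivAt_gaussWeight z).differentiableAt)
  · simp only [hd, hg] at key
    rw [← neg_inj, ← key, ← integral_neg]
    congr 1
    funext z
    ring
  · simp only [hd]
    refine integrable_bounded_mul_gaussWeight (by fun_prop) (A := |r| * N) fun z => ?_
    rw [abs_mul]
    exact mul_le_mul_of_nonneg_left (hN _) (abs_nonneg r)
  · simp only [hg]
    refine (integrable_coord_mul_gaussWeight (h := fun z => f (c + r • z)) (by fun_prop)
      (fun z => hM _) i).neg.congr (Filter.Eventually.of_forall fun z => ?_)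
    simp only [Pi.neg_apply]
    ring
  · exact integrable_bounded_mul_gaussWeight (by fun_prop) fun z => hM _

/-- The Gaussian average of `u` at scale `r`, transported along the drift direction. -/
noncomputable def driftMean (u : E3 → ℝ) (x : E3) (r : ℝ) : ℝ :=
  ∫ z, u ((x + (r ^ 2 / 2) • EuclideanSpace.single 2 (1 : ℝ)) + r • z) * gaussWeight z

theorem hasDerivAt_driftMean {u : E3 → ℝ} (hu : ContDiff ℝ (⊤ : ℕ∞) u)
    (hp : IsLatticePeriodic u) (x : E3) (r : ℝ) :
    HasDerivAt (driftMean u x)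
      (∫ z, r * ((∑ i, pd i (pd i u) ((x + (r ^ 2 / 2) • EuclideanSpace.single 2 (1 : ℝ)) + r • z))
        + pd 2 u ((x + (r ^ 2 / 2) • EuclideanSpace.single 2 (1 : ℝ)) + r • z))
        * gaussWeight z) r := by
  set e : E3 := EuclideanSpace.single 2 (1 : ℝ) with he
  have huc := hu.continuous
  have hDc : Continuous (fderiv ℝ u) := hu.continuous_fderiv (by simp)
  have hpdc (i : Fin 3) := (contDiff_pd hu i).continuous
  have hpdc2 (i : Fin 3) := (contDiff_pd (contDiff_pd hu i) i).continuous
  obtain ⟨M, hM⟩ := hp.exists_norm_le huc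
  obtain ⟨N, hN⟩ := hp.fderiv.exists_norm_le hDc
  have hN0 : 0 ≤ N := (norm_nonneg _).trans (hN 0)
  have hpath (s : ℝ) (z : E3) :
      HasDerivAt (fun s : ℝ => (x + (s ^ 2 / 2) • e) + s • z) (s • e + z) s := by
    have h1 : HasDerivAt (fun s : ℝ => s ^ 2 / 2) s s := by
      convert! (hasDerivAt_pow 2 s).div_const 2 using 1
      simp
    convert! ((h1.smul_const e).const_add x).add ((hasDerivAt_id s).smul_const z) using 1
    simp
  have main := hasDerivAt_integral_of_dominated_loc_of_deriv_le (μ := (volume : Measure E3))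
    (F := fun s z => u ((x + (s ^ 2 / 2) • e) + s • z) * gaussWeight z)
    (F' := fun s z => fderiv ℝ u ((x + (s ^ 2 / 2) • e) + s • z) (s • e + z) * gaussWeight z)
    (x₀ := r) (s := Metric.ball r 1)
    (bound := fun z => (N * (|r| + 1 + ‖z‖)) * gaussWeight z)
    (Metric.ball_mem_nhds r one_pos) ?_ ?_ ?_ ?_ ?_ ?_
  · convert! main.2 using 1
    have hpdb (i : Fin 3) : ∃ A, ∀ z, ‖pd i u z‖ ≤ A := (hp.pd i).exists_norm_le (hpdc i)
    have hpdb2 (i : Fin 3) : ∃ A, ∀ z, ‖pd i (pd i u) z‖ ≤ A :=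
      ((hp.pd i).pd i).exists_norm_le (hpdc2 i)
    choose A hA using hpdb
    choose B hB using hpdb2
    set c := x + (r ^ 2 / 2) • e with hc
    have i1 (i : Fin 3) : Integrable fun z : E3 => z i * pd i u (c + r • z) * gaussWeight z :=
      integrable_coord_mul_gaussWeight (h := fun z => pd i u (c + r • z)) (by fun_prop)
        (fun z => hA i _) i
    have i2 (i : Fin 3) : Integrable fun z : E3 =>
        r * pd i (pd i u) (c + r • z) * gaussWeight z := by
      refine integrable_bounded_mul_gaussWeight (by fun_prop) (A := |r| * B i) fun z => ?_
      rw [abs_mul]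
      exact mul_le_mul_of_nonneg_left (hB i _) (abs_nonneg r)
    have i3 : Integrable fun z : E3 => r * pd 2 u (c + r • z) * gaussWeight z := by
      refine integrable_bounded_mul_gaussWeight (by fun_prop) (A := |r| * A 2) fun z => ?_
      rw [abs_mul]
      exact mul_le_mul_of_nonneg_left (hA 2 _) (abs_nonneg r)
    have hL (z : E3) : r * ((∑ i, pd i (pd i u) (c + r • z)) + pd 2 u (c + r • z))
        * gaussWeight z = (∑ i, r * pd i (pd i u) (c + r • z) * gaussWeight z)
          + r * pd 2 u (c + r • z) * gaussWeight z := by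
      simp only [Fin.sum_univ_three]; ring
    have hR (z : E3) : fderiv ℝ u (c + r • z) (r • e + z) * gaussWeight z =
        (∑ i, z i * pd i u (c + r • z) * gaussWeight z)
          + r * pd 2 u (c + r • z) * gaussWeight z := by
      rw [map_add, map_smul, fderiv_apply_eq_sum_pd u _ z, smul_eq_mul]
      simp only [Fin.sum_univ_three, he, pd]; ring
    simp only [hL, hR]
    rw [integral_add (integrable_finsetSum _ fun i _ => i2 i) i3,
      integral_add (integrable_finsetSum _ fun i _ => i1 i) i3,
      integral_finsetSum _ fun i _ => i2 i, integral_finsetSum _ fun i _ => i1 i]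
    congr 1
    exact Finset.sum_congr rfl fun i _ =>
      (integral_coord_mul_gaussWeight (contDiff_pd hu i) (hp.pd i) c r i).symm
  · refine Filter.Eventually.of_forall fun s => Continuous.aestronglyMeasurable ?_
    have := continuous_gaussWeight
    fun_prop
  · exact integrable_bounded_mul_gaussWeight (by fun_prop) fun z => hM _
  · have := continuous_gaussWeight
    exact Continuous.aestronglyMeasurable (by fun_prop)
  · refine Filter.Eventually.of_forall fun z s hs => ?_
    rw [norm_mul, Real.norm_of_nonneg (gaussWeight_pos z).le]
    refine mul_le_mul_of_nonneg_right ?_ (gaussWeight_pos z).le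
    refine (ContinuousLinearMap.le_opNorm _ _).trans
      (mul_le_mul (hN _) ?_ (norm_nonneg _) hN0)
    have hs1 : |s| ≤ |r| + 1 := by
      rw [Metric.mem_ball, Real.dist_eq] at hs
      have := abs_add_le (s - r) r
      rw [sub_add_cancel] at this
      linarith
    calc ‖s • e + z‖ ≤ ‖s • e‖ + ‖z‖ := norm_add_le _ _
      _ = |s| + ‖z‖ := by simp [norm_smul, he]
      _ ≤ _ := by linarith
  · refine integrable_mul_gaussWeight (by fun_prop) (A := N * (|r| + 1)) fun z => ?_
    rw [abs_of_nonneg (by positivity), mul_assoc]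
    refine mul_le_mul_of_nonneg_left ?_ hN0
    nlinarith [norm_nonneg z, abs_nonneg r, mul_nonneg (abs_nonneg r) (norm_nonneg z)]
  · refine Filter.Eventually.of_forall fun z s _ => ?_
    exact (((hu.differentiable (by simp) _).hasFDerivAt).comp_hasDerivAt s (hpath s z)).mul_const _

theorem neg_integral_gaussWeight_le_driftMean {u : E3 → ℝ} (hu : ContDiff ℝ (⊤ : ℕ∞) u)
    (hp : IsLatticePeriodic u) (hL : ∀ x, -2 ≤ (∑ i, pd i (pd i u) x) + pd 2 u x)
    {x : E3} (hx : u x = 0) : -∫ z, gaussWeight z ≤ driftMean u x 1 := by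
  set m := ∫ z, gaussWeight z with hm
  have hd (r : ℝ) := (hasDerivAt_driftMean hu hp x r).add ((hasDerivAt_pow 2 r).mul_const m)
  have hmono : MonotoneOn (fun r => driftMean u x r + r ^ 2 * m) (Set.Icc 0 1) := by
    refine monotoneOn_of_deriv_nonneg (convex_Icc 0 1)
      (fun r _ => (hd r).continuousAt.continuousWithinAt)
      (fun r _ => (hd r).differentiableAt.differentiableWithinAt) fun r hr => ?_
    rw [interior_Icc] at hr
    refine le_of_le_of_eq ?_ (hd r).deriv.symm
    have hpdc (i : Fin 3) := (contDiff_pd hu i).continuous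
    have hpdc2 (i : Fin 3) := (contDiff_pd (contDiff_pd hu i) i).continuous
    set c := x + (r ^ 2 / 2) • (EuclideanSpace.single 2 (1 : ℝ) : E3) with hc
    have hLp : IsLatticePeriodic fun y => r * ((∑ i, pd i (pd i u) y) + pd 2 u y) := by
      intro y a ha
      simp only [fun i => (hp.pd i).pd i y a ha, hp.pd 2 y a ha]
    obtain ⟨A, hA⟩ := hLp.exists_norm_le (by fun_prop)
    have hle : ∫ z, -(2 * r) * gaussWeight z ≤
        ∫ z, r * ((∑ i, pd i (pd i u) (c + r • z)) + pd 2 u (c + r • z)) * gaussWeight z := by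
      refine integral_mono (integrable_gaussWeight.const_mul _)
        (integrable_bounded_mul_gaussWeight (by fun_prop) fun z => hA _) fun z => ?_
      refine mul_le_mul_of_nonneg_right ?_ (gaussWeight_pos z).le
      nlinarith [mul_le_mul_of_nonneg_left (hL (c + r • z)) hr.1.le]
    rw [integral_const_mul, ← hm] at hle
    norm_num
    linarith
  have h01 := hmono (Set.left_mem_Icc.mpr zero_le_one) (Set.right_mem_Icc.mpr zero_le_one)
    zero_le_one
  have h0 : driftMean u x 0 = 0 := by simp [driftMean, hx]
  simp only [h0] at h01
  linarith

theorem exp_le_gaussWeight {z : E3} (hz : ∀ i, |z i| ≤ 3 / 2) :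
    Real.exp (-(27 / 8)) ≤ gaussWeight z := by
  refine Real.exp_le_exp.mpr ?_
  have h (i : Fin 3) : z i ^ 2 ≤ (3 / 2) ^ 2 := sq_le_sq' (abs_le.mp (hz i)).1 (abs_le.mp (hz i)).2
  rw [EuclideanSpace.real_norm_sq_eq, Fin.sum_univ_three]
  linarith [h 0, h 1, h 2]

/-- The `L¹` estimate on the three-torus: a smooth `ℤ³`-periodic function `u` on `ℝ³` with
`sup u = 0` satisfying `Δu + ∂_t u ≥ −2` (coordinates `(x, y, t)`, with `t` the third
coordinate) has a uniform `L¹` bound over the unit cube. -/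
theorem L1_bound_on_torus :
    ∃ C : ℝ, 0 < C ∧
      ∀ u : EuclideanSpace ℝ (Fin 3) → ℝ,
        ContDiff ℝ (⊤ : ℕ∞) u →
        (∀ (x a : EuclideanSpace ℝ (Fin 3)), (∀ i, ∃ k : ℤ, a i = (k : ℝ)) →
          u (x + a) = u x) →
        (⨆ x, u x) = 0 →
        (∀ x, -2 ≤ (∑ i, pd i (pd i u) x) + pd 2 u x) →
        ∫ x in {x : EuclideanSpace ℝ (Fin 3) | ∀ i, 0 ≤ x i ∧ x i ≤ 1}, |u x| ≤ C := by
  set m : ℝ := ∫ z : E3, gaussWeight z with hm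
  have hm0 : 0 ≤ m := integral_nonneg fun z => (gaussWeight_pos z).le
  refine ⟨Real.exp (27 / 8) * m + 1, by positivity, fun u hu hp hsup hL => ?_⟩
  replace hp : IsLatticePeriodic u := hp
  have huc := hu.continuous
  obtain ⟨M, hM⟩ := hp.exists_norm_le huc
  have hbdd : BddAbove (Set.range u) :=
    ⟨M, by rintro _ ⟨x, rfl⟩; exact (le_abs_self _).trans (hM x)⟩
  have hu0 (x : E3) : u x ≤ 0 := hsup ▸ le_ciSup hbdd x
  obtain ⟨x, hxQ, hmax⟩ := isCompact_unitCube.exists_isMaxOn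
    ⟨0, fun i => by simp⟩ huc.continuousOn
  have hx : u x = 0 := by
    refine le_antisymm (hu0 x) (hsup ▸ ciSup_le fun y => ?_)
    obtain ⟨y', hy', hyy⟩ := exists_mem_unitCube hp y
    exact hyy ▸ hmax hy'
  have hmean := neg_integral_gaussWeight_le_driftMean hu hp hL hx
  set c : E3 := x + ((1 : ℝ) ^ 2 / 2) • EuclideanSpace.single 2 (1 : ℝ) with hc
  have hshift : driftMean u x 1 = ∫ y, u y * gaussWeight (y - c) := by
    rw [driftMean, ← integral_sub_right_eq_self _ c]
    simp [hc]
  have hk_int : Integrable fun y => u y * gaussWeight (y - c) := by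
    have h := (integrable_bounded_mul_gaussWeight (h := fun z => u (z + c)) (by fun_prop)
      (fun z => hM _)).comp_sub_right c
    simpa using h
  have hcoord (y : E3) (hy : y ∈ unitCube) (i : Fin 3) : |(y - c) i| ≤ 3 / 2 := by
    have h1 := hy i
    have h2 := hxQ i
    rw [abs_le]
    fin_cases i <;> simp [hc] at h1 h2 ⊢ <;> constructor <;> linarith
  have hpt (y : E3) (hy : y ∈ unitCube) :
      |u y| ≤ Real.exp (27 / 8) * -(u y * gaussWeight (y - c)) := by
    have hk := exp_le_gaussWeight (hcoord y hy)
    have h1 : 1 ≤ Real.exp (27 / 8) * gaussWeight (y - c) := by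
      calc (1 : ℝ) = Real.exp (27 / 8) * Real.exp (-(27 / 8)) := by rw [← Real.exp_add]; simp
        _ ≤ _ := mul_le_mul_of_nonneg_left hk (Real.exp_pos _).le
    rw [abs_of_nonpos (hu0 y)]
    nlinarith [mul_le_mul_of_nonneg_left h1 (neg_nonneg.mpr (hu0 y))]
  have hk_scaled := (hk_int.neg.const_mul (Real.exp (27 / 8)))
  calc ∫ y in unitCube, |u y|
      ≤ ∫ y in unitCube, Real.exp (27 / 8) * -(u y * gaussWeight (y - c)) :=
        setIntegral_mono_on (huc.abs.continuousOn.integrableOn_compact isCompact_unitCube)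
          hk_scaled.integrableOn isCompact_unitCube.measurableSet hpt
    _ ≤ ∫ y, Real.exp (27 / 8) * -(u y * gaussWeight (y - c)) := by
        refine setIntegral_le_integral hk_scaled (Filter.Eventually.of_forall fun y => ?_)
        exact mul_nonneg (Real.exp_pos _).le
          (neg_nonneg.mpr (mul_nonpos_of_nonpos_of_nonneg (hu0 y) (gaussWeight_pos _).le))
    _ = Real.exp (27 / 8) * -driftMean u x 1 := by
        rw [integral_const_mul, integral_neg, hshift]
    _ ≤ Real.exp (27 / 8) * m := mul_le_mul_of_nonneg_left (by linarith) (Real.exp_pos _).le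
    _ ≤ _ := by linarith
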